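/- arXiv:1001.2451 — 3 statements merged into one kernel-verified Lean document; each statement's English description precedes it below -/
import Mathlib

section
/- Let n ∈ ℕ, 0 ≤ m ≤ n−1, 0 ≤ φ₁ < φ₂ < ⋯ < φ_n < 2π. Then φ₁,…,φ_n are the nodes of a positive trigonometric (n−1−m, n, dσ) quadrature formula if and only if there exist complex numbers ã₀,…,ã_{n−2} with |ã_j| < 1 for all j and ã_j = a_j for j = 0,…,n−m−2, the polynomial Φ̃_{n−1} generated by Φ̃₀ = 1 and Φ̃_j(z) = zΦ̃_{j−1}(z) − ã_{j−1}Φ̃*_{j−1}(z), and an η ∈ 𝕋 such that, with z = e^{iφ} and a fixed square root η^{1/2} of η, η^{−1/2} e^{−inφ/2} ∏_{s=1}^n (e^{iφ} − e^{iφ_s}) = 2 Re{ e^{−inφ/2} η^{1/2} Φ̃*_{n−1}(e^{iφ}) } for all φ. -/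
/-!
With `z_s = e^{iφ_s}`, the nodal identity says that `∏ (z - z_s)` is the para-orthogonal polynomial
`zΦ̃_{n-1} + ηΦ̃*_{n-1}` (`two_re_eq`), and exactness of the quadrature formula says that the
functionals of `σ` and of the discrete measure `∑ μ_s δ_{z_s}` agree on `1, z, …, z^{n-1-m}`
(`trig_exact_iff`), equivalently on `Φ_0, …, Φ_{n-1-m}` (`linear_vanish`).

From the identity to the formula: by Christoffel–Darboux, the kernel
`K(z, w) = ∑_{k<n} Φ̃_k(z) conj Φ̃_k(w) / h_k` vanishes at pairs of distinct zeros of the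
para-orthogonal polynomial. Hence the suitably scaled matrix `Φ̃_k(z_s)` has orthonormal rows, so
also orthonormal columns, and the weights `μ_s = 1 / K(z_s, z_s)` give `∑ μ_s Φ̃_k(z_s) = δ_{k0}`
(`exists_weights`). As `Φ̃_k = Φ_k` for `k ≤ n-1-m`, this is the required exactness.

From the formula to the identity: take for `Φ̃_k` the orthogonal polynomials `discOP` of the discrete
measure. Its inner product is definite on polynomials of degree `< n`, so the first `n - 1` Verblunsky
coefficients lie in the open disc (`discV_norm_lt`). The `n`-th polynomial is the nodal polynomial
(`discOP_self`), and its constant term shows that the last coefficient is unimodular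
(`discV_last_norm`). Agreement of the moments forces `ã_j = a_j` for `j < n-1-m`.
-/

open MeasureTheory Real Polynomial

/-- `TrigPoly l γ f` : `f` belongs to the real span of
`cos((k+γ)φ)`, `sin((k+γ)φ)` for `0 ≤ k ≤ l`. -/
def TrigPoly (l : ℕ) (γ : ℝ) (f : ℝ → ℝ) : Prop :=
  ∃ a b : ℕ → ℝ, ∀ φ : ℝ,
    f φ = ∑ k ∈ Finset.range (l + 1),
      (a k * Real.cos ((k + γ) * φ) + b k * Real.sin ((k + γ) * φ))

/-- The reversed polynomial `P*(z) = z^n conj(P(1/conj z))` at degree `n`. -/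
noncomputable def pstar (n : ℕ) (P : Polynomial ℂ) : Polynomial ℂ :=
  Polynomial.reflect n (P.map (starRingEnd ℂ))

open scoped ComplexConjugate

/-! ### Reversed polynomials and the Szegő recurrence -/

lemma conj_mul_self_of_norm_one {z : ℂ} (hz : ‖z‖ = 1) : conj z * z = 1 := by
  rw [mul_comm, Complex.mul_conj, Complex.normSq_eq_norm_sq, hz]; simp

/-- On the unit circle the reversed polynomial is `z ^ k` times the conjugate. -/
lemma pstar_eval {k : ℕ} {p : ℂ[X]} (hp : p.natDegree ≤ k) {z : ℂ} (hz : ‖z‖ = 1) :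
    (pstar k p).eval z = z ^ k * conj (p.eval z) := by
  have h1 := conj_mul_self_of_norm_one hz
  let _ : Invertible (conj z) := ⟨z, by rw [mul_comm]; exact h1, h1⟩
  have h := eval₂_reflect_mul_pow (RingHom.id ℂ) (conj z) k (p.map (starRingEnd ℂ))
    (natDegree_map_le.trans hp)
  have h2 : eval₂ (RingHom.id ℂ) z (pstar k p) * (conj z) ^ k = conj (p.eval z) := by
    rw [← eval_map_apply (starRingEnd ℂ) z]
    exact h
  rw [← h2]
  change _ = z ^ k * ((pstar k p).eval z * conj z ^ k)
  have h3 : conj z ^ k * z ^ k = 1 := by rw [← mul_pow, h1, one_pow]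
  linear_combination -(pstar k p).eval z * h3

lemma pstar_natDegree_le {k : ℕ} {p : ℂ[X]} (hp : p.natDegree ≤ k) :
    (pstar k p).natDegree ≤ k :=
  natDegree_reflect_le.trans (max_le le_rfl (natDegree_map_le.trans hp))

lemma szego_step {k : ℕ} {p : ℂ[X]} (hp : p.Monic ∧ p.natDegree = k) (c : ℂ) :
    (X * p - C c * pstar k p).Monic ∧ (X * p - C c * pstar k p).natDegree = k + 1 := by
  obtain ⟨hm, hd⟩ := hp
  have hXm : (X * p).Monic := monic_X.mul hm
  have hXd : (X * p).natDegree = k + 1 := by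
    rw [natDegree_X_mul hm.ne_zero, hd]
  have hlt : (C c * pstar k p).degree < (X * p).degree := by
    rw [degree_eq_natDegree hXm.ne_zero, hXd]
    refine lt_of_le_of_lt degree_le_natDegree ?_
    have := (natDegree_C_mul_le c (pstar k p)).trans (pstar_natDegree_le hd.le)
    exact_mod_cast Nat.lt_succ_of_le this
  refine ⟨hXm.sub_of_left hlt, ?_⟩
  rw [natDegree_eq_of_degree_eq (degree_sub_eq_left_of_degree_lt hlt), hXd]

lemma szego_monic {M : ℕ} {a : ℕ → ℂ} {Φ : ℕ → ℂ[X]} (h0 : Φ 0 = 1)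
    (hrec : ∀ j < M, Φ (j + 1) = X * Φ j - C (a j) * pstar j (Φ j)) :
    ∀ k ≤ M, (Φ k).Monic ∧ (Φ k).natDegree = k := by
  intro k
  induction k with
  | zero => intro _; rw [h0]; exact ⟨monic_one, natDegree_one⟩
  | succ k ih =>
    intro hk
    rw [hrec k hk]
    exact szego_step (ih (by omega)) _

/-! ### Christoffel–Darboux and the quadrature formula of a para-orthogonal polynomial -/

/-- Christoffel–Darboux identity, stated for values `f k = Φₖ(z)`, `g k = Φₖ*(z)`,
`f' k = conj Φₖ(w)`, `g' k = conj Φₖ*(w)`, with `x = z`, `y = conj w`. -/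
lemma christoffel_darboux {M : ℕ} {a f g f' g' : ℕ → ℂ} {h : ℕ → ℂ} {x y : ℂ}
    (hh : ∀ k, h k ≠ 0) (hhs : ∀ k, h (k + 1) = h k * (1 - a k * conj (a k)))
    (hf0 : f 0 = 1) (hg0 : g 0 = 1) (hf0' : f' 0 = 1) (hg0' : g' 0 = 1)
    (hf : ∀ k < M, f (k + 1) = x * f k - a k * g k)
    (hg : ∀ k < M, g (k + 1) = g k - conj (a k) * (x * f k))
    (hf' : ∀ k < M, f' (k + 1) = y * f' k - conj (a k) * g' k)
    (hg' : ∀ k < M, g' (k + 1) = g' k - a k * (y * f' k)) :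
    ∀ k ≤ M, (1 - y * x) * (∑ j ∈ Finset.range (k + 1), f' j * f j / h j) * h k =
      g' k * g k - (y * f' k) * (x * f k) := by
  intro k
  induction k with
  | zero => intro _; simp [hf0, hg0, hf0', hg0', hh 0]
  | succ k ih =>
    intro hk
    have := ih (by omega)
    rw [Finset.sum_range_succ, hg k hk, hg' k hk, mul_add, add_mul, mul_assoc _ (_ / _),
      div_mul_cancel₀ _ (hh (k + 1)), hf k hk, hf' k hk, hhs k]
    linear_combination (1 - a k * conj (a k)) * this

/-- The zeros of `zΦₙ₋₁ + ηΦₙ₋₁*` carry positive weights, namely `1 / K(z_s, z_s)` with `K` the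
Christoffel–Darboux kernel, for which the functional `p ↦ ∑ μ_s p(z_s)` kills `Φ₁, …, Φₙ₋₁`. -/
lemma exists_weights {n : ℕ} (hn : 1 ≤ n) {a : ℕ → ℂ} (ha : ∀ j, ‖a j‖ < 1) {Φ : ℕ → ℂ[X]}
    (h0 : Φ 0 = 1) (hrec : ∀ j < n - 1, Φ (j + 1) = X * Φ j - C (a j) * pstar j (Φ j))
    {z : Fin n → ℂ} (hz : ∀ s, ‖z s‖ = 1) (hinj : Function.Injective z) {η : ℂ} (hη : ‖η‖ = 1)
    (hzero : ∀ s, z s * (Φ (n - 1)).eval (z s) + η * (pstar (n - 1) (Φ (n - 1))).eval (z s) = 0) :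
    ∃ μ : Fin n → ℝ, (∀ s, 0 < μ s) ∧
      ∀ k < n, ∑ s, (μ s : ℂ) * (Φ k).eval (z s) = if k = 0 then 1 else 0 := by
  have hmon := szego_monic h0 hrec
  let hr : ℕ → ℝ := fun k => ∏ j ∈ Finset.range k, (1 - ‖a j‖ ^ 2)
  have hrpos : ∀ k, 0 < hr k := fun k => Finset.prod_pos fun j _ => by
    have := ha j; have := norm_nonneg (a j); nlinarith
  have hrs : ∀ k, (hr (k + 1) : ℂ) = (hr k : ℂ) * (1 - a k * conj (a k)) := by
    intro k
    simp only [hr, Finset.prod_range_succ]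
    rw [Complex.mul_conj, Complex.normSq_eq_norm_sq]
    push_cast; ring
  have hne : ∀ k, (hr k : ℂ) ≠ 0 := fun k => by exact_mod_cast (hrpos k).ne'
  let f : Fin n → ℕ → ℂ := fun s k => (Φ k).eval (z s)
  let g : Fin n → ℕ → ℂ := fun s k => (pstar k (Φ k)).eval (z s)
  have hps : ∀ s, ∀ k ≤ n - 1, g s k = z s ^ k * conj (f s k) := fun s k hk =>
    pstar_eval (hmon k hk).2.le (hz s)
  have hf : ∀ s, ∀ k < n - 1, f s (k + 1) = z s * f s k - a k * g s k := by
    intro s k hk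
    simp [f, g, hrec k hk]
  have hg : ∀ s, ∀ k < n - 1, g s (k + 1) = g s k - conj (a k) * (z s * f s k) := by
    intro s k hk
    have h1 := conj_mul_self_of_norm_one (hz s)
    have h2 : conj (z s) ^ k * z s ^ k = 1 := by rw [← mul_pow, h1, one_pow]
    rw [hps s (k + 1) hk, hf s k hk, hps s k hk.le]
    simp only [map_sub, map_mul, map_pow, Complex.conj_conj]
    rw [pow_succ]
    linear_combination z s ^ k * conj (f s k) * h1 - conj (a k) * z s * f s k * h2
  let K : Fin n → Fin n → ℂ := fun s t =>
    ∑ j ∈ Finset.range n, conj (f t j) * f s j / (hr j : ℂ)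
  have hf0 : ∀ s, f s 0 = 1 := fun s => by simp [f, h0]
  have hg0 : ∀ s, g s 0 = 1 := fun s => by rw [hps s 0 (Nat.zero_le _), hf0]; simp
  have hKoff : ∀ s t, s ≠ t → K s t = 0 := by
    intro s t hst
    have hcd := christoffel_darboux (M := n - 1) (a := a) (f := f s) (g := g s)
      (f' := fun k => conj (f t k)) (g' := fun k => conj (g t k)) (h := fun k => (hr k : ℂ))
      (x := z s) (y := conj (z t)) hne hrs (hf0 s) (hg0 s) (by simp [hf0]) (by simp [hg0])
      (hf s) (hg s) (fun k hk => by simp [hf t k hk]) (fun k hk => by simp [hg t k hk])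
      (n - 1) le_rfl
    rw [Nat.sub_add_cancel hn] at hcd
    have e1 : z s * f s (n - 1) = -(η * g s (n - 1)) := eq_neg_of_add_eq_zero_left (hzero s)
    have e2 : conj (z t) * conj (f t (n - 1)) = -(conj η * conj (g t (n - 1))) := by
      rw [← map_mul, eq_neg_of_add_eq_zero_left (hzero t), map_neg, map_mul]
    have e3 := conj_mul_self_of_norm_one hη
    rw [e1, e2] at hcd
    have hr0 : (1 - conj (z t) * z s) * K s t * (hr (n - 1) : ℂ) = 0 := by
      refine hcd.trans ?_
      linear_combination -(conj (g t (n - 1))) * g s (n - 1) * e3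
    have hd : 1 - conj (z t) * z s ≠ 0 := by
      intro h
      apply hst
      apply hinj
      linear_combination (-z t) * h - z s * conj_mul_self_of_norm_one (hz t)
    simpa [hd, hne] using hr0
  let κ : Fin n → ℝ := fun s => ∑ j ∈ Finset.range n, ‖f s j‖ ^ 2 / hr j
  have hKd : ∀ s, K s s = (κ s : ℂ) := by
    intro s
    simp only [K, κ]
    push_cast
    refine Finset.sum_congr rfl fun j _ => ?_
    rw [Complex.conj_mul']
  have hκ : ∀ s, 0 < κ s := by
    intro s
    refine Finset.sum_pos' (fun j _ => div_nonneg (sq_nonneg _) (hrpos j).le)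
      ⟨0, Finset.mem_range.2 hn, ?_⟩
    rw [hf0]; simpa using hrpos 0
  have hκne : ∀ s, (κ s : ℂ) ≠ 0 := fun s => Complex.ofReal_ne_zero.2 (ne_of_gt (hκ s))
  -- `A * B = 1` says that the kernel is diagonal at the nodes; `B * A = 1` is the orthogonality.
  let A : Matrix (Fin n) (Fin n) ℂ := Matrix.of fun s k => f s k
  let B : Matrix (Fin n) (Fin n) ℂ := Matrix.of fun k s =>
    conj (f s k) / ((hr k : ℂ) * (κ s : ℂ))
  have hAB : A * B = 1 := by
    ext s t
    rw [Matrix.mul_apply]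
    have : ∑ k, A s k * B k t = K s t / (κ t : ℂ) := by
      simp only [K, A, B, Matrix.of_apply, Finset.sum_div]
      rw [Finset.sum_range]
      refine Finset.sum_congr rfl fun k _ => ?_
      have := hne k; have := hκne t
      field_simp
    rw [this, Matrix.one_apply]
    split_ifs with h
    · subst h; rw [hKd, div_self (hκne s)]
    · rw [hKoff s t h, zero_div]
  have hBA : B * A = 1 := mul_eq_one_comm.1 hAB
  refine ⟨fun s => 1 / κ s, fun s => one_div_pos.2 (hκ s), fun k hk => ?_⟩
  have h := congrFun (congrFun hBA ⟨0, hn⟩) ⟨k, hk⟩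
  rw [Matrix.mul_apply, Matrix.one_apply] at h
  simp only [A, B, Matrix.of_apply, hf0, Fin.mk.injEq] at h
  rw [show (if k = 0 then (1 : ℂ) else 0) = if 0 = k then 1 else 0 by simp [eq_comm], ← h]
  refine Finset.sum_congr rfl fun s _ => ?_
  simp [f, hr]

/-! ### Orthogonal polynomials of a discrete measure -/

/-- The monic orthogonal polynomials of the measure with masses `μ s` at the points `z s` of the
unit circle, generated by the Szegő recurrence with coefficient `⟨1, zΦ_j⟩ / ‖Φ_j‖²`.
They are meaningful for `k ≤ n`; afterwards the denominator may vanish. -/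
noncomputable def discOP {n : ℕ} (μ : Fin n → ℝ) (z : Fin n → ℂ) : ℕ → ℂ[X]
  | 0 => 1
  | j + 1 => X * discOP μ z j -
      C ((∑ s, (μ s : ℂ) * (z s * (discOP μ z j).eval (z s))) /
        ((∑ s, μ s * ‖(discOP μ z j).eval (z s)‖ ^ 2 : ℝ) : ℂ)) * pstar j (discOP μ z j)

/-- The Verblunsky coefficients of the discrete measure. -/
noncomputable def discV {n : ℕ} (μ : Fin n → ℝ) (z : Fin n → ℂ) (j : ℕ) : ℂ :=
  (∑ s, (μ s : ℂ) * (z s * (discOP μ z j).eval (z s))) /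
    ((∑ s, μ s * ‖(discOP μ z j).eval (z s)‖ ^ 2 : ℝ) : ℂ)

section discrete

variable {n : ℕ} {μ : Fin n → ℝ} {z : Fin n → ℂ}

lemma discOP_succ (j : ℕ) :
    discOP μ z (j + 1) = X * discOP μ z j - C (discV μ z j) * pstar j (discOP μ z j) := rfl

lemma discOP_monic (k : ℕ) : (discOP μ z k).Monic ∧ (discOP μ z k).natDegree = k :=
  szego_monic (M := k) (a := discV μ z) rfl (fun j _ => discOP_succ j) k le_rfl

lemma orth_of_degree_lt {k : ℕ} {F : Fin n → ℂ}
    (hF : ∀ i < k, ∑ s, (μ s : ℂ) * (conj (z s) ^ i * F s) = 0) {q : ℂ[X]}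
    (hq : q.degree < k) : ∑ s, (μ s : ℂ) * (conj (q.eval (z s)) * F s) = 0 := by
  rcases eq_or_ne q 0 with rfl | hq0
  · simp
  have hq' : q.natDegree < k := (natDegree_lt_iff_degree_lt hq0).2 hq
  have : ∀ s, (μ s : ℂ) * (conj (q.eval (z s)) * F s) =
      ∑ i ∈ Finset.range k, conj (q.coeff i) * ((μ s : ℂ) * (conj (z s) ^ i * F s)) := by
    intro s
    rw [eval_eq_sum_range' hq', map_sum, Finset.sum_mul, Finset.mul_sum]
    refine Finset.sum_congr rfl fun i _ => ?_
    simp only [map_mul, map_pow]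
    ring
  rw [Finset.sum_congr rfl fun s _ => this s, Finset.sum_comm]
  refine Finset.sum_eq_zero fun i hi => ?_
  rw [← Finset.mul_sum, hF i (Finset.mem_range.1 hi), mul_zero]

/-- The inner product of `n` positive masses is definite on polynomials of degree `< n`. -/
lemma eq_zero_of_sum_sq (hμ : ∀ s, 0 < μ s) (hinj : Function.Injective z) {q : ℂ[X]}
    (hq : q.natDegree < n) (h : ∑ s, μ s * ‖q.eval (z s)‖ ^ 2 = 0) : q = 0 := by
  refine eq_zero_of_natDegree_lt_card_of_eval_eq_zero q hinj (fun s => ?_) (by simpa using hq)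
  have := (Finset.sum_eq_zero_iff_of_nonneg
    (fun s _ => mul_nonneg (hμ s).le (sq_nonneg _))).1 h s (Finset.mem_univ s)
  simpa [(hμ s).ne'] using this

lemma discOP_norm_pos (hμ : ∀ s, 0 < μ s) (hinj : Function.Injective z) {k : ℕ} (hk : k < n) :
    0 < ∑ s, μ s * ‖(discOP μ z k).eval (z s)‖ ^ 2 := by
  refine lt_of_le_of_ne (Finset.sum_nonneg fun s _ => mul_nonneg (hμ s).le (sq_nonneg _)) ?_
  intro h
  refine (discOP_monic (μ := μ) (z := z) k).1.ne_zero (eq_zero_of_sum_sq hμ hinj ?_ h.symm)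
  rwa [(discOP_monic k).2]

/-- Once `Φ_k` is orthogonal to lower powers, `⟨z ^ k, Φ_k⟩ = ‖Φ_k‖²`. -/
lemma discOP_top {k : ℕ}
    (ho : ∀ i < k, ∑ s, (μ s : ℂ) * (conj (z s) ^ i * (discOP μ z k).eval (z s)) = 0) :
    ∑ s, (μ s : ℂ) * (conj (z s) ^ k * (discOP μ z k).eval (z s)) =
      ((∑ s, μ s * ‖(discOP μ z k).eval (z s)‖ ^ 2 : ℝ) : ℂ) := by
  obtain ⟨hm, hd⟩ := discOP_monic (μ := μ) (z := z) k
  have hdeg : (discOP μ z k).degree = k := by rw [degree_eq_natDegree hm.ne_zero, hd]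
  have hlt : (discOP μ z k - X ^ k).degree < (k : WithBot ℕ) := by
    rw [← hdeg]
    refine degree_sub_lt_left ?_ hm.ne_zero ?_
    · rw [hdeg, degree_X_pow]
    · rw [hm.leadingCoeff, (monic_X_pow k).leadingCoeff]
  have h := orth_of_degree_lt ho hlt
  have h2 : ((∑ s, μ s * ‖(discOP μ z k).eval (z s)‖ ^ 2 : ℝ) : ℂ) =
      ∑ s, (μ s : ℂ) * (conj ((discOP μ z k).eval (z s)) * (discOP μ z k).eval (z s)) := by
    push_cast
    exact Finset.sum_congr rfl fun s _ => by rw [Complex.conj_mul']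
  rw [h2, ← sub_eq_zero, ← neg_eq_zero, ← h, neg_sub, ← Finset.sum_sub_distrib]
  refine Finset.sum_congr rfl fun s _ => ?_
  simp only [eval_sub, eval_pow, eval_X, map_sub, map_pow]
  ring

lemma discOP_succ_eval (hz : ∀ s, ‖z s‖ = 1) (k : ℕ) (s : Fin n) :
    (discOP μ z (k + 1)).eval (z s) = z s * (discOP μ z k).eval (z s) -
      discV μ z k * (z s ^ k * conj ((discOP μ z k).eval (z s))) := by
  rw [discOP_succ, ← pstar_eval (discOP_monic k).2.le (hz s)]
  simp

lemma discV_mul (hμ : ∀ s, 0 < μ s) (hinj : Function.Injective z) {k : ℕ} (hk : k < n) :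
    discV μ z k * ((∑ s, μ s * ‖(discOP μ z k).eval (z s)‖ ^ 2 : ℝ) : ℂ) =
      ∑ s, (μ s : ℂ) * (z s * (discOP μ z k).eval (z s)) :=
  div_mul_cancel₀ _ (by exact_mod_cast (discOP_norm_pos hμ hinj hk).ne')

lemma sum_pow_mul_conj (k : ℕ) (F : Fin n → ℂ) :
    ∑ s, (μ s : ℂ) * (z s ^ k * conj (F s)) =
      conj (∑ s, (μ s : ℂ) * (conj (z s) ^ k * F s)) := by
  simp [map_sum]

/-- Orthogonality of `Φ_{k+1}` to `z, …, z ^ k` is inherited from `Φ_k`; orthogonality to `1` is what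
the choice of the coefficient ensures. -/
lemma discOP_orth (hμ : ∀ s, 0 < μ s) (hz : ∀ s, ‖z s‖ = 1) (hinj : Function.Injective z) :
    ∀ k ≤ n, ∀ i < k,
      ∑ s, (μ s : ℂ) * (conj (z s) ^ i * (discOP μ z k).eval (z s)) = 0 := by
  intro k
  induction k with
  | zero => intro _ i hi; omega
  | succ k ih =>
    intro hk i hi
    have ho := ih (by omega)
    simp only [discOP_succ_eval hz]
    rcases i with _ | i
    · have h1 := discV_mul hμ hinj (k := k) hk
      have h2 := sum_pow_mul_conj (μ := μ) (z := z) k fun s => (discOP μ z k).eval (z s)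
      rw [discOP_top ho, Complex.conj_ofReal] at h2
      rw [← h2, Finset.mul_sum, ← sub_eq_zero, ← neg_eq_zero, neg_sub,
        ← Finset.sum_sub_distrib] at h1
      rw [← h1]
      refine Finset.sum_congr rfl fun s _ => ?_
      ring
    · -- shifting by one power turns both terms into lower orthogonality relations of `Φ_k`
      have h1 := ho i (by omega)
      have h2 := sum_pow_mul_conj (μ := μ) (z := z) (k - 1 - i)
        fun s => (discOP μ z k).eval (z s)
      rw [ho (k - 1 - i) (by omega), map_zero] at h2
      have : ∑ s, (μ s : ℂ) * (conj (z s) ^ i * (discOP μ z k).eval (z s)) -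
          discV μ z k * ∑ s, (μ s : ℂ) * (z s ^ (k - 1 - i) *
            conj ((discOP μ z k).eval (z s))) = 0 := by rw [h1, h2]; simp
      rw [← this, Finset.mul_sum, ← Finset.sum_sub_distrib]
      refine Finset.sum_congr rfl fun s _ => ?_
      have e1 := conj_mul_self_of_norm_one (hz s)
      have e2 : conj (z s) ^ (i + 1) * z s ^ k = z s ^ (k - 1 - i) := by
        obtain ⟨d, rfl⟩ : ∃ d, k = i + 1 + d := ⟨k - 1 - i, by omega⟩
        rw [pow_add (z s) (i + 1), ← mul_assoc, ← mul_pow, e1, one_pow, one_mul]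
        congr 1; omega
      rw [← e2, pow_succ]
      linear_combination (μ s : ℂ) * conj (z s) ^ i * (discOP μ z k).eval (z s) * e1

/-- `‖Φ_{k+1}‖² = ‖Φ_k‖² (1 - |a_k|²)`, hence `|a_k| < 1` as long as `k + 1 < n`. -/
lemma discV_norm_lt (hμ : ∀ s, 0 < μ s) (hz : ∀ s, ‖z s‖ = 1) (hinj : Function.Injective z)
    {k : ℕ} (hk : k + 1 < n) : ‖discV μ z k‖ < 1 := by
  have hp := discOP_norm_pos hμ hinj (k := k) (by omega)
  have hp1 := discOP_norm_pos hμ hinj hk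
  have htop := discOP_top (discOP_orth hμ hz hinj k (by omega))
  have htop1 := discOP_top (discOP_orth hμ hz hinj (k + 1) (by omega))
  have hV := discV_mul hμ hinj (k := k) (by omega)
  set H := ∑ s, μ s * ‖(discOP μ z k).eval (z s)‖ ^ 2
  set H1 := ∑ s, μ s * ‖(discOP μ z (k + 1)).eval (z s)‖ ^ 2
  have hV' : conj (discV μ z k) * (H : ℂ) =
      ∑ s, (μ s : ℂ) * (conj (z s) * conj ((discOP μ z k).eval (z s))) := by
    rw [← Complex.conj_ofReal H, ← map_mul, hV, map_sum]
    simp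
  have key : (H1 : ℂ) = H - discV μ z k * (conj (discV μ z k) * (H : ℂ)) := by
    rw [hV', ← htop1, ← htop, Finset.mul_sum, ← Finset.sum_sub_distrib]
    refine Finset.sum_congr rfl fun s _ => ?_
    rw [discOP_succ_eval hz]
    have e1 := conj_mul_self_of_norm_one (hz s)
    have e2 : conj (z s) ^ k * z s ^ k = 1 := by rw [← mul_pow, e1, one_pow]
    rw [pow_succ]
    linear_combination (μ s : ℂ) * conj (z s) ^ k * (discOP μ z k).eval (z s) * e1 -
      (μ s : ℂ) * discV μ z k * conj (z s) * conj ((discOP μ z k).eval (z s)) * e2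
  rw [← mul_assoc, Complex.mul_conj, Complex.normSq_eq_norm_sq] at key
  have key' : H1 = H - ‖discV μ z k‖ ^ 2 * H := by exact_mod_cast key
  have : ‖discV μ z k‖ ^ 2 < 1 := by
    by_contra! h
    nlinarith
  exact (sq_lt_one_iff₀ (norm_nonneg _)).1 this

/-- The `n`-th polynomial of a measure with `n` mass points is the nodal polynomial. -/
lemma discOP_self (hμ : ∀ s, 0 < μ s) (hz : ∀ s, ‖z s‖ = 1) (hinj : Function.Injective z)
    (hn : 1 ≤ n) : discOP μ z n = ∏ s, (X - C (z s)) := by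
  obtain ⟨hm, hd⟩ := discOP_monic (μ := μ) (z := z) n
  have hdeg : (discOP μ z n).degree = n := by rw [degree_eq_natDegree hm.ne_zero, hd]
  have hPm : (∏ s, (X - C (z s))).Monic := monic_prod_of_monic _ _ fun s _ => monic_X_sub_C _
  have hlt : (discOP μ z n - ∏ s, (X - C (z s))).degree < n := by
    rw [← hdeg]
    refine degree_sub_lt_left ?_ hm.ne_zero ?_
    · rw [hdeg, degree_prod]; simp
    · rw [hm.leadingCoeff, hPm.leadingCoeff]
  have hval : ∀ s, (discOP μ z n).eval (z s) =
      (discOP μ z n - ∏ s, (X - C (z s))).eval (z s) := by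
    intro s
    rw [eval_sub, eval_prod, Finset.prod_eq_zero (Finset.mem_univ s) (by simp), sub_zero]
  have h := orth_of_degree_lt (discOP_orth hμ hz hinj n le_rfl) hlt
  rw [← sub_eq_zero]
  set q := discOP μ z n - ∏ s, (X - C (z s))
  refine eq_zero_of_sum_sq hμ hinj ?_ ?_
  · rcases eq_or_ne q 0 with h0 | h0
    · rw [h0, natDegree_zero]; exact hn
    · exact (natDegree_lt_iff_degree_lt h0).2 hlt
  · rw [← Complex.ofReal_inj, Complex.ofReal_zero, ← h]
    push_cast
    exact Finset.sum_congr rfl fun s _ => by rw [hval s, Complex.conj_mul']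

lemma pstar_coeff_zero {k : ℕ} {p : ℂ[X]} (hm : p.Monic) (hd : p.natDegree = k) :
    (pstar k p).coeff 0 = 1 := by
  rw [pstar, coeff_reflect, revAt_le (Nat.zero_le k), Nat.sub_zero, coeff_map, ← hd,
    hm.coeff_natDegree, map_one]

/-- The last coefficient is, up to sign, the constant term of the nodal polynomial, which is a
product of unimodular numbers. -/
lemma discV_last_norm (hμ : ∀ s, 0 < μ s) (hz : ∀ s, ‖z s‖ = 1) (hinj : Function.Injective z)
    (hn : 1 ≤ n) : ‖discV μ z (n - 1)‖ = 1 := by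
  have h := discOP_self hμ hz hinj hn
  obtain ⟨N, rfl⟩ : ∃ N, n = N + 1 := ⟨n - 1, by omega⟩
  rw [discOP_succ] at h
  have h2 := congrArg (fun p => ‖p.coeff 0‖) h
  obtain ⟨hm, hd⟩ := discOP_monic (μ := μ) (z := z) N
  simp only [coeff_sub, coeff_X_mul_zero, coeff_C_mul, pstar_coeff_zero hm hd] at h2
  rw [coeff_zero_eq_eval_zero, eval_prod] at h2
  simpa [hz] using h2

end discrete

/-! ### Moment functionals -/

/-- The normalized moment functional of `σ`, acting on polynomials in `e^{iφ}`. -/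
noncomputable def circInt (σ : Measure ℝ) (p : ℂ[X]) : ℂ :=
  ((1 / (2 * π) : ℝ) : ℂ) * ∫ φ : ℝ, p.eval (Complex.exp (Complex.I * (φ : ℂ))) ∂σ

lemma norm_exp_I_mul (φ : ℝ) : ‖Complex.exp (Complex.I * (φ : ℂ))‖ = 1 := by
  rw [mul_comm]; exact Complex.norm_exp_ofReal_mul_I φ

lemma integrable_eval (σ : Measure ℝ) [IsFiniteMeasure σ] (p : ℂ[X]) :
    Integrable (fun φ : ℝ => p.eval (Complex.exp (Complex.I * (φ : ℂ)))) σ := by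
  simp only [eval_eq_sum_range]
  refine integrable_finsetSum _ fun i _ => Integrable.const_mul ?_ _
  refine Integrable.of_bound (Continuous.aestronglyMeasurable (by fun_prop)) 1 ?_
  filter_upwards with φ
  rw [norm_pow, norm_exp_I_mul, one_pow]

/-- `circInt σ` minus the functional of a discrete measure, as a linear map. -/
noncomputable def defect (σ : Measure ℝ) [IsFiniteMeasure σ] {n : ℕ} (μ : Fin n → ℝ)
    (z : Fin n → ℂ) : ℂ[X] →ₗ[ℂ] ℂ where
  toFun p := circInt σ p - ∑ s, (μ s : ℂ) * p.eval (z s)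
  map_add' p q := by
    simp only [circInt, eval_add, mul_add, Finset.sum_add_distrib]
    rw [integral_add (integrable_eval σ p) (integrable_eval σ q)]
    ring
  map_smul' c p := by
    simp only [circInt, eval_smul, smul_eq_mul, RingHom.id_apply]
    rw [integral_const_mul, mul_sub, Finset.mul_sum]
    congr 1
    · ring
    · exact Finset.sum_congr rfl fun s _ => by ring

/-- A functional vanishing on one monic polynomial of each degree `≤ N` vanishes on all polynomials
of degree `≤ N`. -/
lemma linear_vanish (L : ℂ[X] →ₗ[ℂ] ℂ) {N : ℕ} {Φ : ℕ → ℂ[X]}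
    (hΦ : ∀ k ≤ N, (Φ k).Monic ∧ (Φ k).natDegree = k) (hL : ∀ k ≤ N, L (Φ k) = 0) :
    ∀ d ≤ N + 1, ∀ p : ℂ[X], p.degree < (d : WithBot ℕ) → L p = 0 := by
  intro d
  induction d with
  | zero =>
    intro _ p hp
    have : p = 0 := by
      rw [← degree_eq_bot]
      simpa [Nat.WithBot.lt_zero_iff] using hp
    rw [this, map_zero]
  | succ d ih =>
    intro hd p hp
    obtain ⟨hm, hdeg⟩ := hΦ d (by omega)
    have hq : (p - p.coeff d • Φ d).degree < (d : WithBot ℕ) := by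
      rw [degree_lt_iff_coeff_zero] at hp ⊢
      intro i hi
      rw [coeff_sub, coeff_smul, smul_eq_mul]
      rcases hi.eq_or_lt with rfl | hi
      · have h1 : (Φ d).coeff d = 1 := by
          conv_lhs => rw [← hdeg]
          simpa [hdeg] using hm.coeff_natDegree
        rw [h1]; ring
      · rw [hp i hi, coeff_eq_zero_of_natDegree_lt (p := Φ d) (by omega)]; ring
    have := ih (by omega) _ hq
    rw [map_sub, map_smul, hL d (by omega)] at this
    simpa using this

lemma exp_pow_eq (φ : ℝ) (k : ℕ) : Complex.exp (Complex.I * (φ : ℂ)) ^ k =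
    ((Real.cos (k * φ) : ℝ) : ℂ) + ((Real.sin (k * φ) : ℝ) : ℂ) * Complex.I := by
  rw [← Complex.exp_nat_mul, Complex.ofReal_cos, Complex.ofReal_sin, ← Complex.exp_mul_I]
  congr 1; push_cast; ring

section moments

variable (σ : Measure ℝ) [IsFiniteMeasure σ]

lemma integrable_cos (c : ℝ) : Integrable (fun φ : ℝ => Real.cos (c * φ)) σ :=
  Integrable.of_bound (Continuous.aestronglyMeasurable (by fun_prop)) 1
    (Filter.Eventually.of_forall fun φ => Real.abs_cos_le_one _)

lemma integrable_sin (c : ℝ) : Integrable (fun φ : ℝ => Real.sin (c * φ)) σ :=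
  Integrable.of_bound (Continuous.aestronglyMeasurable (by fun_prop)) 1
    (Filter.Eventually.of_forall fun φ => Real.abs_sin_le_one _)

lemma circInt_pow (k : ℕ) : circInt σ (X ^ k) =
    ((1 / (2 * π) * ∫ φ, Real.cos (k * φ) ∂σ : ℝ) : ℂ) +
      ((1 / (2 * π) * ∫ φ, Real.sin (k * φ) ∂σ : ℝ) : ℂ) * Complex.I := by
  simp only [circInt, eval_pow, eval_X, exp_pow_eq]
  rw [integral_add (integrable_cos σ k).ofReal ((integrable_sin σ k).ofReal.mul_const _),
    integral_mul_const, integral_complex_ofReal, integral_complex_ofReal]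
  push_cast; ring

/-- Exactness on real trigonometric polynomials of degree `≤ N` is equality of the complex
moments of order `0, …, N`. -/
lemma trig_exact_iff {n : ℕ} (μ φs : Fin n → ℝ) (N : ℕ) :
    (∀ t : ℝ → ℝ, TrigPoly N 0 t →
      (1 / (2 * π)) * ∫ φ, t φ ∂σ = ∑ s, μ s * t (φs s)) ↔
    ∀ k ≤ N, defect σ μ (fun s => Complex.exp (Complex.I * (φs s : ℂ))) (X ^ k) = 0 := by
  have hdef : ∀ k : ℕ, defect σ μ (fun s => Complex.exp (Complex.I * (φs s : ℂ))) (X ^ k) =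
      ((1 / (2 * π) * ∫ φ, Real.cos (k * φ) ∂σ - ∑ s, μ s * Real.cos (k * φs s) : ℝ) : ℂ) +
      ((1 / (2 * π) * ∫ φ, Real.sin (k * φ) ∂σ - ∑ s, μ s * Real.sin (k * φs s) : ℝ) : ℂ)
        * Complex.I := by
    intro k
    change circInt σ (X ^ k) - _ = _
    simp only [circInt_pow, eval_pow, eval_X, exp_pow_eq, mul_add, Finset.sum_add_distrib]
    push_cast
    simp only [← mul_assoc, ← Finset.sum_mul]
    ring
  constructor
  · intro h k hk
    have hc := h (fun φ => Real.cos (k * φ)) ⟨Pi.single k 1, 0, fun φ => by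
      rw [Finset.sum_eq_single k] <;> simp +contextual; omega⟩
    have hs := h (fun φ => Real.sin (k * φ)) ⟨0, Pi.single k 1, fun φ => by
      rw [Finset.sum_eq_single k] <;> simp +contextual; omega⟩
    rw [hdef, hc, hs]
    simp
  · rintro h t ⟨a, b, ht⟩
    have hcs : ∀ k ≤ N,
        1 / (2 * π) * ∫ φ, Real.cos (k * φ) ∂σ = ∑ s, μ s * Real.cos (k * φs s) ∧
        1 / (2 * π) * ∫ φ, Real.sin (k * φ) ∂σ = ∑ s, μ s * Real.sin (k * φs s) := by
      intro k hk
      have h1 := h k hk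
      rw [hdef] at h1
      have hre := congrArg Complex.re h1
      have him := congrArg Complex.im h1
      simp only [Complex.add_re, Complex.add_im, Complex.re_ofReal_mul, Complex.im_ofReal_mul,
        Complex.ofReal_re, Complex.ofReal_im, Complex.I_re, Complex.I_im, mul_zero, mul_one,
        add_zero, zero_add, Complex.zero_re, Complex.zero_im] at hre him
      exact ⟨sub_eq_zero.1 hre, sub_eq_zero.1 him⟩
    simp only [ht, add_zero]
    have hi : ∀ k ∈ Finset.range (N + 1),
        Integrable (fun φ : ℝ => a k * Real.cos (k * φ) + b k * Real.sin (k * φ)) σ := fun k _ =>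
      ((integrable_cos σ k).const_mul _).add ((integrable_sin σ k).const_mul _)
    rw [integral_finsetSum _ hi]
    simp only [Finset.mul_sum]
    rw [Finset.sum_comm]
    refine Finset.sum_congr rfl fun k hk => ?_
    obtain ⟨hc, hs⟩ := hcs k (Nat.lt_succ_iff.1 (Finset.mem_range.1 hk))
    rw [integral_add ((integrable_cos σ k).const_mul _) ((integrable_sin σ k).const_mul _),
      integral_const_mul, integral_const_mul]
    have : ∑ s, μ s * (a k * Real.cos (k * φs s) + b k * Real.sin (k * φs s)) =
        a k * ∑ s, μ s * Real.cos (k * φs s) + b k * ∑ s, μ s * Real.sin (k * φs s) := by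
      rw [Finset.mul_sum, Finset.mul_sum, ← Finset.sum_add_distrib]
      exact Finset.sum_congr rfl fun s _ => by ring
    rw [this, ← hc, ← hs]
    ring

end moments

/-! ### The nodal identity -/

/-- Up to the unimodular factor `η^{-1/2} e^{-inφ/2}`, the right-hand side of the nodal identity is the
para-orthogonal polynomial `zp + ηp*`. -/
lemma two_re_eq {n : ℕ} (hn : 1 ≤ n) {p : ℂ[X]} (hp : p.natDegree ≤ n - 1) {ηh : ℂ}
    (hη : ‖ηh‖ = 1) (φ : ℝ) :
    ((2 * (Complex.exp (-Complex.I * n * φ / 2) * ηh *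
      (pstar (n - 1) p).eval (Complex.exp (Complex.I * (φ : ℂ)))).re : ℝ) : ℂ) =
    ηh⁻¹ * Complex.exp (-Complex.I * n * φ / 2) *
      (Complex.exp (Complex.I * (φ : ℂ)) * p.eval (Complex.exp (Complex.I * (φ : ℂ))) +
        ηh ^ 2 * (pstar (n - 1) p).eval (Complex.exp (Complex.I * (φ : ℂ)))) := by
  have hz := norm_exp_I_mul φ
  have hwz : Complex.exp (-Complex.I * n * φ / 2) * Complex.exp (-Complex.I * n * φ / 2) *
      Complex.exp (Complex.I * (φ : ℂ)) ^ n = 1 := by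
    rw [← Complex.exp_nat_mul, ← Complex.exp_add, ← Complex.exp_add, Complex.exp_eq_one_iff]
    exact ⟨0, by push_cast; ring⟩
  have hw : conj (Complex.exp (-Complex.I * n * φ / 2)) *
      Complex.exp (-Complex.I * n * φ / 2) = 1 := by
    rw [← Complex.exp_conj, ← Complex.exp_add, Complex.exp_eq_one_iff]
    exact ⟨0, by simp [Complex.conj_ofNat]; ring⟩
  rw [← Complex.add_conj, pstar_eval hp hz]
  generalize Complex.exp (-Complex.I * n * φ / 2) = w at *
  generalize Complex.exp (Complex.I * (φ : ℂ)) = z at *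
  have hη1 := conj_mul_self_of_norm_one hη
  have hz1 := conj_mul_self_of_norm_one hz
  have hηne : ηh ≠ 0 := by rintro rfl; simp at hη
  have hηi : ηh⁻¹ = conj ηh := by
    rw [inv_eq_iff_eq_inv, eq_comm, inv_eq_of_mul_eq_one_right hη1]
  have hcw : conj w = w * z ^ n := by linear_combination (-conj w) * hwz + w * z ^ n * hw
  have hzz : z ^ n * conj z ^ (n - 1) = z := by
    obtain ⟨N, rfl⟩ : ∃ N, n = N + 1 := ⟨n - 1, by omega⟩
    rw [Nat.add_sub_cancel, pow_succ, mul_right_comm, ← mul_pow, mul_comm z, hz1, one_pow, one_mul]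
  simp only [map_mul, map_pow, Complex.conj_conj, hηi, hcw]
  linear_combination (w * conj ηh * p.eval z) * hzz -
    w * ηh * z ^ (n - 1) * conj (p.eval z) * hη1

lemma exp_nodes_injective {n : ℕ} {φs : Fin n → ℝ} (hmono : StrictMono φs)
    (hrange : ∀ s, φs s ∈ Set.Ico 0 (2 * π)) :
    Function.Injective fun s => Complex.exp (Complex.I * (φs s : ℂ)) := by
  intro s t hst
  obtain ⟨k, hk⟩ := Complex.exp_eq_exp_iff_exists_int.1 hst
  have hk' : φs s = φs t + k * (2 * π) := by
    have := congrArg Complex.im hk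
    simpa using this
  obtain ⟨h1, h2⟩ := hrange s
  obtain ⟨h3, h4⟩ := hrange t
  have hpi := Real.pi_pos
  have hlt : (k : ℝ) < 1 := by
    by_contra! h
    nlinarith
  have hgt : (-1 : ℝ) < k := by
    by_contra! h
    nlinarith
  have hk0 : k = 0 := by
    have a1 : k < 1 := by exact_mod_cast hlt
    have a2 : -1 < k := by exact_mod_cast hgt
    omega
  apply hmono.injective
  rw [hk', hk0]; simp

theorem stmt13
    (σ : Measure ℝ) [IsFiniteMeasure σ]
    (hsupp : σ (Set.Icc 0 (2 * π))ᶜ = 0)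
    (hnorm : (1 / (2 * π)) * ∫ _φ, (1 : ℝ) ∂σ = 1)
    -- the orthogonal polynomials `Φ` and their Verblunsky coefficients `a`
    (Φ : ℕ → Polynomial ℂ) (hΦ0 : Φ 0 = 1)
    (hΦmonic : ∀ k, (Φ k).Monic) (hΦdeg : ∀ k, (Φ k).natDegree = k)
    (hΦorth : ∀ k : ℕ, ∀ j < k,
      ∫ φ : ℝ, Complex.exp (-(j : ℂ) * Complex.I * (φ : ℂ)) *
        (Φ k).eval (Complex.exp (Complex.I * (φ : ℂ))) ∂σ = 0)
    (a : ℕ → ℂ) (ha : ∀ j, ‖a j‖ < 1)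
    (hrec : ∀ j, Φ (j + 1) = X * Φ j - C (a j) * pstar j (Φ j))
    -- the nodes
    (n : ℕ) (hn : 1 ≤ n) (m : ℕ) (hm : m ≤ n - 1)
    (φs : Fin n → ℝ) (hmono : StrictMono φs)
    (hrange : ∀ s, φs s ∈ Set.Ico 0 (2 * π)) :
    -- `φ₁, …, φ_n` are the nodes of a positive trigonometric `(n-1-m, n, dσ)` qf
    (∃ μ : Fin n → ℝ, (∀ s, 0 < μ s) ∧
        ∀ t : ℝ → ℝ, TrigPoly (n - 1 - m) 0 t →
          (1 / (2 * π)) * ∫ φ, t φ ∂σ = ∑ s, μ s * t (φs s)) ↔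
    -- the nodes polynomial representation via the recurrence relation
    (∃ at_ : ℕ → ℂ,
        (∀ j, ‖at_ j‖ < 1) ∧ (∀ j, j + m + 1 < n → at_ j = a j) ∧
        ∃ Φt : ℕ → Polynomial ℂ, Φt 0 = 1 ∧
          (∀ j < n - 1, Φt (j + 1) = X * Φt j - C (at_ j) * pstar j (Φt j)) ∧
          ∃ ηh : ℂ, ‖ηh‖ = 1 ∧
            ∀ φ : ℝ,
              ηh⁻¹ * Complex.exp (-Complex.I * n * φ / 2) *
                  ∏ s, (Complex.exp (Complex.I * (φ : ℂ)) -
                    Complex.exp (Complex.I * (φs s : ℂ))) =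
                ((2 * (Complex.exp (-Complex.I * n * φ / 2) * ηh *
                  (pstar (n - 1) (Φt (n - 1))).eval
                    (Complex.exp (Complex.I * (φ : ℂ)))).re : ℝ) : ℂ)) := by
  have hinj := exp_nodes_injective hmono hrange
  have hz : ∀ s, ‖Complex.exp (Complex.I * (φs s : ℂ))‖ = 1 := fun s => norm_exp_I_mul _
  have hone : circInt σ 1 = 1 := by
    have h := circInt_pow σ 0
    simp only [pow_zero, Nat.cast_zero, zero_mul, Real.cos_zero, Real.sin_zero, hnorm] at h
    simpa using h
  have hint : ∀ k, k ≠ 0 → circInt σ (Φ k) = 0 := by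
    intro k hk
    have h := hΦorth k 0 (Nat.pos_of_ne_zero hk)
    simp only [Nat.cast_zero, neg_zero, zero_mul, Complex.exp_zero, one_mul] at h
    rw [circInt, h, mul_zero]
  simp only [fun μ : Fin n → ℝ => trig_exact_iff σ μ φs (n - 1 - m)]
  set z : Fin n → ℂ := fun s => Complex.exp (Complex.I * (φs s : ℂ)) with hzdef
  constructor
  · rintro ⟨μ, hμ, hex⟩
    have hvan := linear_vanish (defect σ μ z) (N := n - 1 - m) (Φ := fun k => X ^ k)
      (fun k _ => ⟨monic_X_pow k, natDegree_X_pow k⟩) hex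
    have hsum : ∀ k < n - 1 - m, ∑ s, (μ s : ℂ) * (Φ (k + 1)).eval (z s) = 0 := by
      intro k hk
      have h := hvan (k + 2) (by omega) (Φ (k + 1)) (by
        rw [degree_eq_natDegree (hΦmonic _).ne_zero, hΦdeg]
        exact_mod_cast Nat.lt_succ_self _)
      change circInt σ (Φ (k + 1)) - _ = 0 at h
      rwa [hint _ (Nat.succ_ne_zero k), zero_sub, neg_eq_zero] at h
    have hcoef : ∀ k < n - 1 - m, discOP μ z k = Φ k → discV μ z k = a k := by
      intro k hk hkΦ
      have hpos := discOP_norm_pos hμ hinj (k := k) (by omega)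
      have hV := discV_mul hμ hinj (k := k) (by omega)
      have htop := discOP_top (discOP_orth hμ hz hinj k (by omega))
      have h2 := sum_pow_mul_conj (μ := μ) (z := z) k fun s => (discOP μ z k).eval (z s)
      rw [htop, Complex.conj_ofReal] at h2
      have hne : ((∑ s, μ s * ‖(discOP μ z k).eval (z s)‖ ^ 2 : ℝ) : ℂ) ≠ 0 := by
        exact_mod_cast hpos.ne'
      refine mul_right_cancel₀ hne ?_
      rw [hV, ← h2, hkΦ, ← sub_eq_zero, ← hsum k hk, Finset.mul_sum, ← Finset.sum_sub_distrib]
      refine Finset.sum_congr rfl fun s _ => ?_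
      rw [hrec k, eval_sub, eval_mul, eval_mul, eval_X, eval_C,
        pstar_eval (hΦdeg k).le (hz s)]
      ring
    have hsame : ∀ k ≤ n - 1 - m, discOP μ z k = Φ k := by
      intro k
      induction k with
      | zero => intro _; rw [hΦ0]; rfl
      | succ k ih =>
        intro hk
        have h := ih (by omega)
        rw [discOP_succ, hcoef k hk h, h, hrec k]
    refine ⟨fun j => if j < n - 1 then discV μ z j else 0, ?_, ?_, discOP μ z, rfl, ?_, ?_⟩
    · intro j
      dsimp only
      split_ifs with hj
      · exact discV_norm_lt hμ hz hinj (by omega)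
      · simp
    · intro j hj
      dsimp only
      rw [if_pos (by omega)]
      exact hcoef j (by omega) (hsame j (by omega))
    · intro j hj
      dsimp only
      rw [if_pos hj, discOP_succ]
    · obtain ⟨ηh, hηh⟩ := IsAlgClosed.exists_pow_nat_eq (-discV μ z (n - 1)) (n := 2) two_pos
      have hη1 : ‖ηh‖ = 1 := by
        have h := congrArg norm hηh
        rw [norm_pow, norm_neg, discV_last_norm hμ hz hinj hn] at h
        exact (pow_eq_one_iff_of_nonneg (norm_nonneg _) two_ne_zero).1 h
      refine ⟨ηh, hη1, fun φ => ?_⟩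
      rw [two_re_eq hn (discOP_monic _).2.le hη1, hηh]
      congr 1
      have h := congrArg (fun p => p.eval (Complex.exp (Complex.I * (φ : ℂ))))
        (discOP_self hμ hz hinj hn)
      have hs := discOP_succ (μ := μ) (z := z) (n - 1)
      rw [Nat.sub_add_cancel hn] at hs
      rw [hs] at h
      simp only [eval_sub, eval_mul, eval_X, eval_C, eval_prod] at h
      rw [← h]
      ring
  · rintro ⟨at_, hat, hata, Φt, hΦt0, hΦtrec, ηh, hη, hid⟩
    have hmon := szego_monic hΦt0 hΦtrec
    have hηne : ηh ≠ 0 := by rintro rfl; simp at hη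
    obtain ⟨μ, hμ, hsum⟩ := exists_weights hn hat hΦt0 hΦtrec hz hinj (η := ηh ^ 2)
      (by rw [norm_pow, hη, one_pow]) (fun s => by
        have h := hid (φs s)
        rw [two_re_eq hn (hmon _ le_rfl).2.le hη, Finset.prod_eq_zero (Finset.mem_univ s)
          (sub_self _), mul_zero] at h
        simpa [hηne, Complex.exp_ne_zero] using h.symm)
    have hsame : ∀ k ≤ n - 1 - m, Φt k = Φ k := by
      intro k
      induction k with
      | zero => intro _; rw [hΦ0, hΦt0]
      | succ k ih =>
        intro hk
        rw [hΦtrec k (by omega), ih (by omega), hrec k, hata k (by omega)]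
    have hvan := linear_vanish (defect σ μ z) (N := n - 1 - m) (Φ := Φ)
      (fun k _ => ⟨hΦmonic k, hΦdeg k⟩) (fun k hk => by
        change circInt σ (Φ k) - ∑ s, (μ s : ℂ) * (Φ k).eval (z s) = 0
        have h := hsum k (by omega)
        rw [hsame k hk] at h
        rw [h]
        split_ifs with hk0
        · rw [hk0, hΦ0, hone, sub_self]
        · rw [hint k hk0, sub_zero])
    refine ⟨μ, hμ, fun k hk => hvan (k + 1) (by omega) _ ?_⟩
    rw [degree_X_pow]
    exact_mod_cast Nat.lt_succ_self k
end

section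
/- Let μ be a positive measure on [0,2π], let ñ ∈ ℕ, γ ∈ {0, 1/2}, and n = 2(ñ+γ). Let P_{n−1}(z) = z^{n−1} + ⋯ be a monic polynomial of degree n−1 satisfying ∫₀^{2π} e^{−ikφ} P_{n−1}(e^{iφ}) dμ(φ) = 0 for k = 0,…,n−2. Then for every η ∈ 𝕋 (with η^{1/2} a fixed square root of η) one has ∫₀^{2π} t(φ) · Re{ η^{1/2} e^{−inφ/2} P*_{n−1}(e^{iφ}) } dμ(φ) = 0 for every t ∈ 𝒯_{ñ−1,γ}. -/
/-!
On the unit circle `P*(z) = z^(n-1) conj (P z)`, hence, with `z = exp (iφ)`, the function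
`η^(1/2) exp (-inφ/2) P*(z)` is the complex conjugate of `conj (η^(1/2)) exp (-i(n/2-1)φ) P(z)`, and
the two have the same real part. Multiplying the latter by `cos ((k+γ)φ)` or `sin ((k+γ)φ)` gives a
combination of `exp (-ijφ) P(z)` with `j = ñ-1-k` and `j = ñ-1+2γ+k`. For `0 ≤ k ≤ ñ-1` both
exponents lie in `0, …, n-2`, so every term integrates to zero by orthogonality.
-/

open MeasureTheory Real Polynomial

/-- On the unit circle, `P*(z) = z^N conj (P z)`. -/
lemma pstar_eval_exp (N : ℕ) (P : Polynomial ℂ) (hP : P.natDegree ≤ N) (φ : ℝ) :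
    (pstar N P).eval (Complex.exp (Complex.I * (φ : ℂ))) =
      Complex.exp (Complex.I * (φ : ℂ)) ^ N *
        (starRingEnd ℂ) (P.eval (Complex.exp (Complex.I * (φ : ℂ)))) := by
  set z := Complex.exp (Complex.I * (φ : ℂ)) with hz
  have hz0 : z ≠ 0 := Complex.exp_ne_zero _
  have hconj : (starRingEnd ℂ) z = z⁻¹ := by
    rw [hz, ← Complex.exp_conj, ← Complex.exp_neg]
    simp
  let _ : Invertible z⁻¹ := invertibleOfNonzero (inv_ne_zero hz0)
  have h := Polynomial.eval₂_reflect_mul_pow (RingHom.id ℂ) z⁻¹ N (P.map (starRingEnd ℂ))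
    (Polynomial.natDegree_map_le.trans hP)
  have h2 : (P.map (starRingEnd ℂ)).eval z⁻¹ = (starRingEnd ℂ) (P.eval z) := by
    rw [← hconj, Polynomial.eval_map_apply]
  rw [invOf_eq_inv, inv_inv] at h
  change (pstar N P).eval z * z⁻¹ ^ N = (P.map (starRingEnd ℂ)).eval z⁻¹ at h
  rw [← h2, ← h, inv_pow]
  field_simp

/-- `exp (-ijφ) P(exp (iφ))`, the integrand of the `j`-th orthogonality condition. -/
noncomputable def orthFun (P : Polynomial ℂ) (j : ℕ) (φ : ℝ) : ℂ :=
  Complex.exp (-(j : ℂ) * Complex.I * (φ : ℂ)) * P.eval (Complex.exp (Complex.I * (φ : ℂ)))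

lemma integrable_orthFun (μ : Measure ℝ) [IsFiniteMeasure μ]
    (hsupp : μ (Set.Icc 0 (2 * π))ᶜ = 0) (P : Polynomial ℂ) (j : ℕ) :
    Integrable (orthFun P j) μ := by
  have hc : Continuous (orthFun P j) := by
    unfold orthFun
    fun_prop
  have h : IntegrableOn (orthFun P j) (Set.Icc 0 (2 * π)) μ :=
    hc.continuousOn.integrableOn_compact isCompact_Icc
  have hμ : μ.restrict (Set.Icc 0 (2 * π)) = μ :=
    Measure.restrict_eq_self_of_ae_mem (mem_ae_iff.2 hsupp)
  rwa [IntegrableOn, hμ] at h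

/-- Euler's formulas turn a trigonometric monomial times the conjugated kernel into a combination
of two orthogonality integrands; `m` stands for `ñ - 1`. -/
lemma trig_mul_kernel (P : Polynomial ℂ) (m d k : ℕ) (hk : k ≤ m) (a b : ℝ) (c : ℂ) (φ : ℝ) :
    ((a * Real.cos ((k + (d : ℝ) / 2) * φ) + b * Real.sin ((k + (d : ℝ) / 2) * φ) : ℝ) : ℂ) *
      (c * Complex.exp (-((m : ℂ) + d / 2) * Complex.I * φ) *
        P.eval (Complex.exp (Complex.I * (φ : ℂ)))) =
      (a - b * Complex.I) / 2 * c * orthFun P (m - k) φ +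
        (a + b * Complex.I) / 2 * c * orthFun P (m + d + k) φ := by
  unfold orthFun
  generalize P.eval (Complex.exp (Complex.I * (φ : ℂ))) = p
  set θ : ℂ := ((k : ℂ) + d / 2) * φ with hθ
  have h1 : Complex.exp (-((m - k : ℕ) : ℂ) * Complex.I * φ) =
      Complex.exp (-((m : ℂ) + d / 2) * Complex.I * φ) * Complex.exp (θ * Complex.I) := by
    rw [← Complex.exp_add, hθ]
    congr 1
    push_cast [hk]
    ring
  have h2 : Complex.exp (-((m + d + k : ℕ) : ℂ) * Complex.I * φ) =
      Complex.exp (-((m : ℂ) + d / 2) * Complex.I * φ) * Complex.exp (-θ * Complex.I) := by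
    rw [← Complex.exp_add, hθ]
    congr 1
    push_cast
    ring
  rw [h1, h2]
  push_cast
  rw [← hθ, Complex.cos, Complex.sin]
  ring

theorem stmt14
    (μ : Measure ℝ) [IsFiniteMeasure μ]
    (hsupp : μ (Set.Icc 0 (2 * π))ᶜ = 0)
    (ntil d : ℕ) (hntil : 1 ≤ ntil) (hd : d = 0 ∨ d = 1)
    (n : ℕ) (hn : n = 2 * ntil + d)
    (P : Polynomial ℂ) (hPmonic : P.Monic) (hPdeg : P.natDegree = n - 1)
    (horth : ∀ k < n - 1,
      ∫ φ : ℝ, Complex.exp (-(k : ℂ) * Complex.I * (φ : ℂ)) *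
        P.eval (Complex.exp (Complex.I * (φ : ℂ))) ∂μ = 0) :
    ∀ ηh : ℂ, ‖ηh‖ = 1 →
      ∀ t : ℝ → ℝ, TrigPoly (ntil - 1) ((d : ℝ) / 2) t →
        ∫ φ : ℝ, t φ *
          (ηh * Complex.exp (-Complex.I * n * φ / 2) *
            (pstar (n - 1) P).eval (Complex.exp (Complex.I * (φ : ℂ)))).re ∂μ = 0 := by
  rintro ηh - t ⟨a, b, ht⟩
  obtain ⟨m, rfl⟩ : ∃ m, ntil = m + 1 := ⟨ntil - 1, by omega⟩
  rw [Nat.add_sub_cancel] at ht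
  set c := (starRingEnd ℂ) ηh with hc
  let G : ℝ → ℂ := fun φ => ∑ k ∈ Finset.range (m + 1),
    ((a k - b k * Complex.I) / 2 * c * orthFun P (m - k) φ +
      (a k + b k * Complex.I) / 2 * c * orthFun P (m + d + k) φ)
  have hint : ∀ j, Integrable (orthFun P j) μ := integrable_orthFun μ hsupp P
  have hterm : ∀ k ∈ Finset.range (m + 1), Integrable (fun φ =>
      (a k - b k * Complex.I) / 2 * c * orthFun P (m - k) φ +
      (a k + b k * Complex.I) / 2 * c * orthFun P (m + d + k) φ) μ := fun k _ =>
    ((hint _).const_mul _).add ((hint _).const_mul _)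
  have hGint : Integrable G μ := integrable_finsetSum _ hterm
  have hG0 : ∫ φ, G φ ∂μ = 0 := by
    rw [integral_finsetSum _ hterm]
    refine Finset.sum_eq_zero fun k hk => ?_
    have hk' := Finset.mem_range.1 hk
    have e1 : ∫ φ, orthFun P (m - k) φ ∂μ = 0 := horth _ (by omega)
    have e2 : ∫ φ, orthFun P (m + d + k) φ ∂μ = 0 := horth _ (by omega)
    rw [integral_add ((hint _).const_mul _) ((hint _).const_mul _),
      integral_const_mul, integral_const_mul, e1, e2]
    simp
  have hkey : ∀ φ : ℝ, t φ * (ηh * Complex.exp (-Complex.I * n * φ / 2) *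
      (pstar (n - 1) P).eval (Complex.exp (Complex.I * (φ : ℂ)))).re = (G φ).re := by
    intro φ
    have hG : G φ = (t φ : ℂ) * (c * Complex.exp (-((m : ℂ) + d / 2) * Complex.I * φ) *
        P.eval (Complex.exp (Complex.I * (φ : ℂ)))) := by
      rw [ht φ, Complex.ofReal_sum, Finset.sum_mul]
      refine Finset.sum_congr rfl fun k hk => ?_
      rw [trig_mul_kernel P m d k (Nat.lt_succ_iff.1 (Finset.mem_range.1 hk))]
    have hconj : ηh * Complex.exp (-Complex.I * n * φ / 2) *
        (pstar (n - 1) P).eval (Complex.exp (Complex.I * (φ : ℂ))) =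
        (starRingEnd ℂ) (c * Complex.exp (-((m : ℂ) + d / 2) * Complex.I * φ) *
          P.eval (Complex.exp (Complex.I * (φ : ℂ)))) := by
      rw [pstar_eval_exp (n - 1) P hPdeg.le φ, map_mul, map_mul, hc, Complex.conj_conj,
        ← Complex.exp_conj, ← Complex.exp_nat_mul, ← mul_assoc, mul_assoc ηh, ← Complex.exp_add]
      have hn1 : n - 1 = 2 * m + 1 + d := by omega
      congr 3
      rw [hn1, hn]
      have h2 : (starRingEnd ℂ) (2 : ℂ) = 2 := Complex.conj_ofNat 2
      simp [h2]
      ring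
    rw [hG, hconj, Complex.conj_re, Complex.re_ofReal_mul]
  simp_rw [hkey]
  have := integral_re (𝕜 := ℂ) hGint
  simpa [hG0] using this
end

section
/- Let m, n ∈ ℕ₀ with 0 ≤ m ≤ 2n−1, let ψ be a positive measure on [−1,1], and let σ be the measure on [−π,π] defined by σ(φ) = ψ(1) − ψ(cos φ) for 0 ≤ φ ≤ π and σ(φ) = ψ(cos φ) − ψ(1) for −π ≤ φ ≤ 0. Let −1 < x_n < ⋯ < x₁ < 1, λ₁,…,λ_n > 0, and set φ_s = arccos x_s, so 0 < φ₁ < ⋯ < φ_n < π. Then ∫_{−1}^{1} p(x) dψ(x) = Σ_{s=1}^n λ_s p(x_s) for every real polynomial p of degree ≤ 2n−1−m if and only if ∫_{−π}^{π} t(φ) dσ(φ) = Σ_{s=1}^n λ_s (t(φ_s) + t(−φ_s)) for every trigonometric polynomial t of degree ≤ 2n−1−m. -/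
/-!
The measure `σ` is the sum of the images of `ψ` under `± arccos`, so for continuous `t`
`∫ t dσ = ∫ (t (arccos y) + t (-arccos y)) dψ(y)`
(`integral_map_arccos_add`). Symmetrizing a trigonometric polynomial kills its sine part and leaves
twice its cosine part, which at `arccos y` is `2 q(y)` with `q = ∑ a_k T_k` of degree at most `l`
(`TrigPoly.exists_polynomial`). Conversely, the Chebyshev polynomials `T_0, …, T_l` span the
polynomials of degree at most `l`, so `p ∘ cos` is an even trigonometric polynomial of degree at
most `l` (`trigPoly_eval_cos`). Under these two passages both quadrature formulas agree up to the
factor `2`.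
-/

open MeasureTheory Real Polynomial

theorem TrigPoly.continuous {l : ℕ} {γ : ℝ} {t : ℝ → ℝ} (ht : TrigPoly l γ t) :
    Continuous t := by
  obtain ⟨a, b, h⟩ := ht
  rw [funext h]
  fun_prop

theorem exists_chebyshev_expansion (l : ℕ) (p : ℝ[X]) (hp : p.natDegree ≤ l) :
    ∃ a : ℕ → ℝ, p = ∑ k ∈ Finset.range (l + 1), C (a k) * Chebyshev.T ℝ k := by
  induction l generalizing p with
  | zero =>
    exact ⟨fun _ => p.coeff 0, by simpa using eq_C_of_natDegree_le_zero hp⟩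
  | succ l ih =>
    have hdeg : (Chebyshev.T ℝ ((l + 1 : ℕ) : ℤ)).natDegree = l + 1 := by
      rw [Chebyshev.natDegree_T, Int.natAbs_natCast]
    have hc : (Chebyshev.T ℝ ((l + 1 : ℕ) : ℤ)).coeff (l + 1) = 2 ^ l := by
      have h := Chebyshev.leadingCoeff_T ℝ ((l + 1 : ℕ) : ℤ)
      rwa [leadingCoeff, hdeg, Int.natAbs_natCast, Nat.add_sub_cancel] at h
    -- `T_{l+1}` has leading coefficient `2 ^ l`, so this multiple cancels the top coefficient of `p`.
    set c : ℝ := p.coeff (l + 1) / 2 ^ l with hcdef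
    obtain ⟨a, ha⟩ := ih (p - C c * Chebyshev.T ℝ ((l + 1 : ℕ) : ℤ)) (by
      rw [natDegree_le_iff_coeff_eq_zero]
      intro N hN
      rw [coeff_sub, coeff_C_mul]
      rcases (Nat.succ_le_of_lt hN).eq_or_lt with h | h
      · rw [← h, Nat.succ_eq_add_one, hc, hcdef]
        field_simp
        ring
      · rw [coeff_eq_zero_of_natDegree_lt (by omega : p.natDegree < N),
          coeff_eq_zero_of_natDegree_lt (by omega : (Chebyshev.T ℝ ((l + 1 : ℕ) : ℤ)).natDegree < N)]
        simp)
    refine ⟨Function.update a (l + 1) c, ?_⟩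
    rw [Finset.sum_range_succ, Function.update_self]
    rw [Finset.sum_congr rfl (g := fun k => C (a k) * Chebyshev.T ℝ (k : ℤ)), ← ha]
    · ring
    · intro k hk
      rw [Function.update_of_ne (Finset.mem_range.1 hk).ne]

theorem trigPoly_eval_cos {l : ℕ} {p : ℝ[X]} (hp : p.natDegree ≤ l) :
    TrigPoly l 0 (fun φ => p.eval (Real.cos φ)) := by
  obtain ⟨a, ha⟩ := exists_chebyshev_expansion l p hp
  refine ⟨a, 0, fun φ => ?_⟩
  simp only [ha, eval_finsetSum, eval_mul, eval_C, Chebyshev.T_real_cos]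
  simp

/-- The symmetrization of a trigonometric polynomial is twice a polynomial in `cos φ`. -/
theorem TrigPoly.exists_polynomial {l : ℕ} {t : ℝ → ℝ} (ht : TrigPoly l 0 t) :
    ∃ q : ℝ[X], q.natDegree ≤ l ∧ ∀ φ, t φ + t (-φ) = 2 * q.eval (Real.cos φ) := by
  obtain ⟨a, b, h⟩ := ht
  refine ⟨∑ k ∈ Finset.range (l + 1), C (a k) * Chebyshev.T ℝ k, ?_, fun φ => ?_⟩
  · refine natDegree_sum_le_of_forall_le _ _ fun k hk => ?_
    refine (natDegree_C_mul_le _ _).trans ?_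
    rw [Chebyshev.natDegree_T, Int.natAbs_natCast]
    exact Nat.lt_succ_iff.1 (Finset.mem_range.1 hk)
  · simp only [h, eval_finsetSum, eval_mul, eval_C, Chebyshev.T_real_cos]
    rw [← Finset.sum_add_distrib, Finset.mul_sum]
    refine Finset.sum_congr rfl fun k _ => ?_
    simp only [mul_neg, Real.cos_neg, Real.sin_neg, add_zero, Int.cast_natCast]
    ring

/-- Change of variables for the symmetric measure obtained by lifting `μ` through `± arccos`. -/
theorem integral_map_arccos_add (μ : Measure ℝ) [IsFiniteMeasure μ] {t : ℝ → ℝ}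
    (ht : Continuous t) :
    ∫ φ, t φ ∂(Measure.map Real.arccos μ + Measure.map (fun x => -Real.arccos x) μ) =
      ∫ y, (t (Real.arccos y) + t (-Real.arccos y)) ∂μ := by
  have h1 : Measurable Real.arccos := Real.measurable_arccos
  have h2 : Measurable fun x => -Real.arccos x := h1.neg
  obtain ⟨B, hB⟩ := isCompact_Icc.exists_bound_of_continuousOn
    (ht.continuousOn (s := Set.Icc (-π) π))
  have i1 : Integrable (fun y => t (Real.arccos y)) μ := by
    refine Integrable.of_bound (ht.measurable.comp h1).aestronglyMeasurable B
      (Filter.Eventually.of_forall fun y => hB _ ⟨?_, Real.arccos_le_pi y⟩)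
    linarith [Real.arccos_nonneg y, Real.pi_pos]
  have i2 : Integrable (fun y => t (-Real.arccos y)) μ := by
    refine Integrable.of_bound (ht.measurable.comp h2).aestronglyMeasurable B
      (Filter.Eventually.of_forall fun y => hB _ ⟨?_, ?_⟩)
    · linarith [Real.arccos_le_pi y]
    · linarith [Real.arccos_nonneg y, Real.pi_pos]
  rw [integral_add_measure, integral_map h1.aemeasurable ht.aestronglyMeasurable,
    integral_map h2.aemeasurable ht.aestronglyMeasurable, integral_add i1 i2]
  · exact (integrable_map_measure ht.aestronglyMeasurable h1.aemeasurable).2 i1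
  · exact (integrable_map_measure ht.aestronglyMeasurable h2.aemeasurable).2 i2

theorem stmt18
    (n m : ℕ) (hn : 1 ≤ n) (hm : m ≤ 2 * n - 1)
    (ψm : Measure ℝ) [IsFiniteMeasure ψm]
    (hψsupp : ψm (Set.Icc (-1 : ℝ) 1)ᶜ = 0)
    -- `σ` is the symmetric measure on `[-π, π]` with
    -- `σ(φ) = ψ(1) - ψ(cos φ)` for `0 ≤ φ ≤ π` and
    -- `σ(φ) = ψ(cos φ) - ψ(1)` for `-π ≤ φ ≤ 0`
    (σ : Measure ℝ)
    (hσ : σ = Measure.map Real.arccos ψm +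
      Measure.map (fun x => -Real.arccos x) ψm)
    (x : Fin n → ℝ) (hxdec : StrictAnti x)
    (hxrange : ∀ s, x s ∈ Set.Ioo (-1 : ℝ) 1)
    (lam : Fin n → ℝ) (hlam : ∀ s, 0 < lam s)
    (φs : Fin n → ℝ) (hφs : ∀ s, φs s = Real.arccos (x s)) :
    (∀ p : Polynomial ℝ, p.natDegree ≤ 2 * n - 1 - m →
        ∫ y, p.eval y ∂ψm = ∑ s, lam s * p.eval (x s)) ↔
    (∀ t : ℝ → ℝ, TrigPoly (2 * n - 1 - m) 0 t →
        ∫ φ, t φ ∂σ = ∑ s, lam s * (t (φs s) + t (-(φs s)))) := by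
  have hae : ∀ᵐ y ∂ψm, Real.cos (Real.arccos y) = y := by
    have hmem : ∀ᵐ y ∂ψm, y ∈ Set.Icc (-1 : ℝ) 1 := hψsupp
    filter_upwards [hmem] with y hy using Real.cos_arccos hy.1 hy.2
  have hcos : ∀ s, Real.cos (φs s) = x s := fun s => by
    rw [hφs, Real.cos_arccos (hxrange s).1.le (hxrange s).2.le]
  -- Both sides of the trigonometric formula are twice those of the algebraic one.
  have key : ∀ (t : ℝ → ℝ) (q : ℝ[X]), Continuous t →
      (∀ φ, t φ + t (-φ) = 2 * q.eval (Real.cos φ)) →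
      ∫ φ, t φ ∂σ = 2 * ∫ y, q.eval y ∂ψm ∧
      ∑ s, lam s * (t (φs s) + t (-(φs s))) = 2 * ∑ s, lam s * q.eval (x s) := by
    intro t q ht h
    constructor
    · rw [hσ, integral_map_arccos_add ψm ht, ← integral_const_mul]
      refine integral_congr_ae ?_
      filter_upwards [hae] with y hy
      rw [h, hy]
    · rw [Finset.mul_sum]
      refine Finset.sum_congr rfl fun s _ => ?_
      rw [h, hcos]
      ring
  constructor
  · intro H t ht
    obtain ⟨q, hq, h⟩ := ht.exists_polynomial
    obtain ⟨e1, e2⟩ := key t q ht.continuous h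
    rw [e1, e2, H q hq]
  · intro H p hp
    have ht := trigPoly_eval_cos hp
    obtain ⟨e1, e2⟩ := key _ p ht.continuous fun φ => by
      rw [Real.cos_neg]
      ring
    have h := H _ ht
    rw [e1, e2] at h
    linarith
end
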